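/- arXiv:2605.07459 — 2 statements merged into one kernel-verified Lean document; each statement's English description precedes it below -/
import Mathlib

section
/- There exists a unique vector v* : S → ℝ such that T v* = v*. -/
/-- The robust expected continuation value: `max_{p ∈ P} ∑_t p t * v t`
(the maximum is attained, by compactness; we use `sSup`). -/
noncomputable def robustSup {S : Type*} [Fintype S] (P : Set (S → ℝ)) (v : S → ℝ) : ℝ :=
  sSup ((fun p => ∑ t, p t * v t) '' P)

/-- The robust Bellman optimality operator
`(T v)(s) = c(s) + γ · min_{a ∈ A} max_{p ∈ P(s,a)} ∑_t p(t) v(t)`. -/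
noncomputable def bellmanT {S A : Type*} [Fintype S] [Fintype A] [Nonempty A]
    (c : S → ℝ) (γ : ℝ) (P : S → A → Set (S → ℝ)) (v : S → ℝ) : S → ℝ :=
  fun s => c s + γ * Finset.univ.inf' Finset.univ_nonempty (fun a => robustSup (P s a) v)

lemma robustSup_le_aux {S : Type*} [Fintype S] (P : Set (S → ℝ)) (hne : P.Nonempty)
    (hcpt : IsCompact P) (hs : ∀ p ∈ P, (∀ t, 0 ≤ p t) ∧ ∑ t, p t = 1) (v w : S → ℝ) :
    robustSup P v ≤ robustSup P w + dist v w := by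
  unfold robustSup
  apply csSup_le (hne.image _)
  rintro _ ⟨p, hp, rfl⟩
  have hb : BddAbove ((fun p : S → ℝ => ∑ t, p t * w t) '' P) :=
    (hcpt.image (by fun_prop)).bddAbove
  have h1 : ∑ t, p t * w t ≤ sSup ((fun p : S → ℝ => ∑ t, p t * w t) '' P) :=
    le_csSup hb ⟨p, hp, rfl⟩
  obtain ⟨h0, hsum⟩ := hs p hp
  have h2 : ∑ t, p t * v t ≤ ∑ t, (p t * w t + p t * dist v w) := by
    apply Finset.sum_le_sum
    intro t _
    rw [← mul_add]
    apply mul_le_mul_of_nonneg_left _ (h0 t)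
    have := dist_le_pi_dist v w t
    rw [Real.dist_eq] at this
    linarith [le_abs_self (v t - w t)]
  rw [Finset.sum_add_distrib, ← Finset.sum_mul, hsum, one_mul] at h2
  show ∑ t, p t * v t ≤ _
  linarith

lemma bellmanT_le_aux {S A : Type*} [Fintype S] [Fintype A] [Nonempty A]
    (c : S → ℝ) (γ : ℝ) (hγ0 : 0 ≤ γ) (P : S → A → Set (S → ℝ))
    (hne : ∀ s a, (P s a).Nonempty) (hcpt : ∀ s a, IsCompact (P s a))
    (hsimplex : ∀ s a, ∀ p ∈ P s a, (∀ t, 0 ≤ p t) ∧ ∑ t, p t = 1) (v w : S → ℝ) (s : S) :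
    bellmanT c γ P v s ≤ bellmanT c γ P w s + γ * dist v w := by
  unfold bellmanT
  have : Finset.univ.inf' Finset.univ_nonempty (fun a => robustSup (P s a) v)
      ≤ Finset.univ.inf' Finset.univ_nonempty (fun a => robustSup (P s a) w) + dist v w := by
    rw [← sub_le_iff_le_add]
    apply Finset.le_inf'
    intro a ha
    rw [sub_le_iff_le_add]
    exact (Finset.inf'_le (fun a => robustSup (P s a) v) ha).trans
      (robustSup_le_aux _ (hne s a) (hcpt s a) (hsimplex s a) v w)
  have := mul_le_mul_of_nonneg_left this hγ0
  rw [mul_add] at this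
  linarith

/-- There exists a unique vector `v*` with `T v* = v*`. -/
theorem robust_bellman_unique_fixed_point {S A : Type*}
    [Fintype S] [Nonempty S] [Fintype A] [Nonempty A]
    (c : S → ℝ) (γ : ℝ) (hγ0 : 0 ≤ γ) (hγ1 : γ < 1)
    (P : S → A → Set (S → ℝ))
    (hne : ∀ s a, (P s a).Nonempty)
    (hcpt : ∀ s a, IsCompact (P s a))
    (hsimplex : ∀ s a, ∀ p ∈ P s a, (∀ t, 0 ≤ p t) ∧ ∑ t, p t = 1) :
    ∃! vstar : S → ℝ, bellmanT c γ P vstar = vstar := by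
  have hc : ContractingWith ⟨γ, hγ0⟩ (bellmanT c γ P) := by
    refine ⟨by exact_mod_cast hγ1, LipschitzWith.of_dist_le_mul fun v w => ?_⟩
    have hnn : 0 ≤ γ * dist v w := mul_nonneg hγ0 dist_nonneg
    show _ ≤ γ * dist v w
    rw [dist_pi_le_iff hnn]
    intro s
    have h1 := bellmanT_le_aux c γ hγ0 P hne hcpt hsimplex v w s
    have h2 := bellmanT_le_aux c γ hγ0 P hne hcpt hsimplex w v s
    rw [dist_comm w v] at h2
    rw [Real.dist_eq, abs_le]
    constructor <;> linarith
  exact ⟨hc.fixedPoint, hc.fixedPoint_isFixedPt, fun y hy => hc.fixedPoint_unique hy⟩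
end

section
/- Let v* be the unique fixed point of T, and let σ and σ' be agent policies with value vectors v^σ and v^{σ'} satisfying v^σ(s) ≥ v^{σ'}(s) for all s ∈ S. Let ŝ ∈ S attain the maximum of s ↦ f(s, σ(s)) over S, and assume σ'(ŝ) = σ(ŝ). Then ‖v^{σ'} − v*‖∞ ≥ (1 − γ) · ‖v^σ − v*‖∞. -/
/-- The potential of a state-action pair:
`f(s,a) = max_{p ∈ P(s,a)} ∑_t p t * v* t − min_{a'} max_{p ∈ P(s,a')} ∑_t p t * v* t`. -/
noncomputable def potential {S A : Type*} [Fintype S] [Fintype A] [Nonempty A]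
    (P : S → A → Set (S → ℝ)) (vstar : S → ℝ) (s : S) (a : A) : ℝ :=
  robustSup (P s a) vstar -
    Finset.univ.inf' Finset.univ_nonempty (fun a' => robustSup (P s a') vstar)

theorem robustSup_le_add {S : Type*} [Fintype S] (P : Set (S → ℝ)) (hne : P.Nonempty)
    (hc : IsCompact P) (hs : ∀ p ∈ P, (∀ t, 0 ≤ p t) ∧ ∑ t, p t = 1) (u w : S → ℝ) (k : ℝ)
    (h : ∀ t, u t ≤ w t + k) : robustSup P u ≤ robustSup P w + k := by
  unfold robustSup
  apply csSup_le (hne.image _)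
  rintro _ ⟨p, hp, rfl⟩
  have hb : BddAbove ((fun p : S → ℝ => ∑ t, p t * w t) '' P) :=
    (hc.image (by fun_prop)).bddAbove
  have h1 : ∑ t, p t * w t ≤ sSup ((fun p : S → ℝ => ∑ t, p t * w t) '' P) :=
    le_csSup hb ⟨p, hp, rfl⟩
  have h2 : ∑ t, p t * u t ≤ ∑ t, (p t * w t + p t * k) := by
    apply Finset.sum_le_sum
    intro t _
    have := mul_le_mul_of_nonneg_left (h t) ((hs p hp).1 t)
    linarith
  rw [Finset.sum_add_distrib, ← Finset.sum_mul, (hs p hp).2] at h2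
  show ∑ t, p t * u t ≤ _
  linarith

theorem vstar_le_value {S A : Type*}
    [Fintype S] [Nonempty S] [Fintype A] [Nonempty A]
    (c : S → ℝ) (γ : ℝ) (hγ0 : 0 ≤ γ) (hγ1 : γ < 1)
    (P : S → A → Set (S → ℝ))
    (hne : ∀ s a, (P s a).Nonempty)
    (hcpt : ∀ s a, IsCompact (P s a))
    (hsimplex : ∀ s a, ∀ p ∈ P s a, (∀ t, 0 ≤ p t) ∧ ∑ t, p t = 1)
    (vstar : S → ℝ) (hfix : bellmanT c γ P vstar = vstar)
    (σ : S → A) (v : S → ℝ)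
    (hval : ∀ s, v s = c s + γ * robustSup (P s (σ s)) v) (s : S) : vstar s ≤ v s := by
  obtain ⟨m, hm⟩ := Finite.exists_max (fun s => vstar s - v s)
  have hR := robustSup_le_add (P m (σ m)) (hne _ _) (hcpt _ _) (hsimplex _ _) vstar v
    (vstar m - v m) (fun t => by linarith [hm t])
  have hf := congrFun hfix m
  simp only [bellmanT] at hf
  have hi : Finset.univ.inf' Finset.univ_nonempty (fun a => robustSup (P m a) vstar)
      ≤ robustSup (P m (σ m)) vstar := Finset.inf'_le _ (Finset.mem_univ _)
  have h1 := mul_le_mul_of_nonneg_left (hi.trans hR) hγ0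
  have h2 := hval m
  have h3 := hm s
  nlinarith

/-- If `vσ ≥ vσ'` entrywise, `ŝ` maximizes `s ↦ f(s, σ s)`, and `σ' ŝ = σ ŝ`,
then `‖vσ' - v*‖∞ ≥ (1 - γ) · ‖vσ - v*‖∞`. -/
theorem potential_combined_bound {S A : Type*}
    [Fintype S] [Nonempty S] [Fintype A] [Nonempty A]
    (c : S → ℝ) (γ : ℝ) (hγ0 : 0 ≤ γ) (hγ1 : γ < 1)
    (P : S → A → Set (S → ℝ))
    (hne : ∀ s a, (P s a).Nonempty)
    (hcpt : ∀ s a, IsCompact (P s a))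
    (hsimplex : ∀ s a, ∀ p ∈ P s a, (∀ t, 0 ≤ p t) ∧ ∑ t, p t = 1)
    (vstar : S → ℝ) (hfix : bellmanT c γ P vstar = vstar)
    (σ σ' : S → A) (vσ vσ' : S → ℝ)
    (hval : ∀ s, vσ s = c s + γ * robustSup (P s (σ s)) vσ)
    (hval' : ∀ s, vσ' s = c s + γ * robustSup (P s (σ' s)) vσ')
    (hge : ∀ s, vσ' s ≤ vσ s)
    (shat : S)
    (hmax : ∀ s, potential P vstar s (σ s) ≤ potential P vstar shat (σ shat))
    (hagree : σ' shat = σ shat) :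
    (1 - γ) * ‖vσ - vstar‖ ≤ ‖vσ' - vstar‖ := by
  have L := fun s => vstar_le_value c γ hγ0 hγ1 P hne hcpt hsimplex vstar hfix σ vσ hval s
  have L' := fun s => vstar_le_value c γ hγ0 hγ1 P hne hcpt hsimplex vstar hfix σ' vσ' hval' s
  have key : γ * potential P vstar shat (σ shat) ≤ ‖vσ' - vstar‖ := by
    have h0 := (le_abs_self _).trans (norm_le_pi_norm (vσ' - vstar) shat)
    have hR := robustSup_le_add (P shat (σ shat)) (hne _ _) (hcpt _ _) (hsimplex _ _) vstar vσ'
      0 (fun t => by linarith [L' t])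
    have hf := congrFun hfix shat
    have hv := hval' shat
    rw [hagree] at hv
    simp only [bellmanT] at hf
    simp only [potential, Pi.sub_apply] at h0 ⊢
    have := mul_le_mul_of_nonneg_left hR hγ0
    linarith
  have key2 : ‖vσ - vstar‖ ≤ γ * ‖vσ - vstar‖ + γ * potential P vstar shat (σ shat) := by
    refine (pi_norm_le_iff_of_nonempty _).2 fun s => ?_
    rw [Real.norm_eq_abs, Pi.sub_apply, abs_of_nonneg (by linarith [L s])]
    have hR := robustSup_le_add (P s (σ s)) (hne _ _) (hcpt _ _) (hsimplex _ _) vσ vstar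
      ‖vσ - vstar‖ (fun t => by
        have h0 := (le_abs_self _).trans (norm_le_pi_norm (vσ - vstar) t)
        simp only [Pi.sub_apply] at h0
        linarith)
    have hf := congrFun hfix s
    have hv := hval s
    have hp := mul_le_mul_of_nonneg_left (hmax s) hγ0
    have hR' := mul_le_mul_of_nonneg_left hR hγ0
    simp only [bellmanT] at hf
    simp only [potential] at hp ⊢
    linarith
  linarith
end
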